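/- Let V be a finite-dimensional faithful representation of a finite group W over a field k with char(k) = 0 or coprime to |W|. If W is generated by pseudoreflections, then k[V] is a free module over the invariant ring k[V]^W. -/

import Mathlib

open MvPolynomial

/-- The action of `g ∈ GL(V)` on `k[V]`: `(g·f)(x) = f(g⁻¹x)`. -/
noncomputable def glAct {n : ℕ} {k : Type*} [Field k]
    (g : LinearMap.GeneralLinearGroup k (Fin n → k)) :
    MvPolynomial (Fin n) k →ₐ[k] MvPolynomial (Fin n) k :=
  aeval fun i => ∑ j, C (((g⁻¹ :
    LinearMap.GeneralLinearGroup k (Fin n → k)) : (Fin n → k) →ₗ[k] (Fin n → k))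
      (Pi.single j 1) i) * X j

/-- A pseudoreflection: an element of `GL(V)` of finite order `> 1` fixing a hyperplane
(the kernel of a nonzero linear form) pointwise. -/
def IsPseudoreflection {n : ℕ} {k : Type*} [Field k]
    (g : LinearMap.GeneralLinearGroup k (Fin n → k)) : Prop :=
  IsOfFinOrder g ∧ g ≠ 1 ∧ ∃ α : (Fin n → k) →ₗ[k] k, α ≠ 0 ∧
    ∀ v : Fin n → k, α v = 0 → ((g : (Fin n → k) →ₗ[k] (Fin n → k)) v = v)

/-- The subalgebra of `G`-invariant polynomials `k[V]^G`. -/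
noncomputable def invariants (n : ℕ) (k : Type*) [Field k]
    (G : Subgroup (LinearMap.GeneralLinearGroup k (Fin n → k))) :
    Subalgebra k (MvPolynomial (Fin n) k) :=
  ⨅ g ∈ G, AlgHom.equalizer (glAct g) (AlgHom.id k (MvPolynomial (Fin n) k))

/-!
Let `R = k[V]^G`. If the pseudoreflection `s` fixes the hyperplane `α = 0`, then `f - s f` is
divisible by `α`, so `1 - s` is `α` times a divided difference operator, which is `R`-linear and
lowers degrees. The group elements `g` with `1 - g` in the left ideal of `End_R k[V]` generated by
degree-lowering operators form a subgroup, hence all of `G`, so that ideal also contains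
`1 - π`, where `π : k[V] → R` is the average over `G`.

Let `I` be the augmentation ideal of `R`. If `P f ∈ I` for all `R`-linear `P : k[V] → R`, then
`f ∈ I k[V]`: each degree-lowering `T` carries this property to `T f`, so `T f ∈ I k[V]` by
induction on the degree, while `π f ∈ I` by assumption. Linear functionals therefore separate the
points of the `k`-space `k[V] / I k[V]`. Elements independent modulo `I` thus have a family of
functionals that is dual to them modulo `I`; its matrix of values has determinant `1` modulo `I`,
so they are independent over `R`. Homogeneous elements lifting a basis of `k[V] / I k[V]` also span
`k[V]`, by the graded Nakayama lemma.
-/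

section ResidueField

universe u

attribute [local instance] Ideal.Quotient.field

variable {R M : Type*} [CommRing R] [AddCommGroup M] [Module R M]

/-- The reductions modulo `I` of the `R`-linear functionals on `M` separate the points of
`M ⧸ I • ⊤`. -/
def DualSeparatesMod (I : Ideal R) (M : Type*) [AddCommGroup M] [Module R M] : Prop :=
  ∀ x : M, (∀ P : Module.Dual R M, P x ∈ I) → x ∈ I • (⊤ : Submodule R M)

theorem DualSeparatesMod.of_one_sub_mem_span {I : Ideal R} (deg : M → ℕ)
    (D : Set (Module.End R M)) (hD : ∀ T ∈ D, ∀ x, T x ≠ 0 → deg (T x) < deg x)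
    (π : Module.Dual R M) (m : M) (hπ : 1 - π.smulRight m ∈ Ideal.span D) :
    DualSeparatesMod I M := by
  intro x
  induction hx : deg x using Nat.strong_induction_on generalizing x with
  | _ d ih =>
  intro hP
  have hker : ∀ T ∈ Ideal.span D, T x ∈ I • (⊤ : Submodule R M) := by
    intro T hT
    induction hT using Submodule.span_induction with
    | mem T hT =>
      by_cases hTx : T x = 0
      · rw [hTx]
        exact zero_mem _
      · exact ih _ (hx ▸ hD T hT x hTx) _ rfl fun P => hP (P ∘ₗ T)
    | zero => exact zero_mem _
    | add T U _ _ hT hU => exact add_mem hT hU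
    | smul B T _ hT => exact Submodule.smul_top_le_comap_smul_top I B hT
  have hdecomp : x = (1 - π.smulRight m) x + π x • m := by simp
  rw [hdecomp]
  exact add_mem (hker _ hπ) (Submodule.smul_mem_smul (hP π) trivial)

theorem span_range_mkQ_eq_top_iff (I : Ideal R) {ι : Type*} {v : ι → M} :
    Submodule.span (R ⧸ I) (Set.range fun i => (I • (⊤ : Submodule R M)).mkQ (v i)) = ⊤ ↔
      Submodule.span R (Set.range v) ⊔ I • ⊤ = ⊤ := by
  rw [← Submodule.restrictScalars_eq_top_iff R,
    Submodule.restrictScalars_span R (R ⧸ I) Ideal.Quotient.mk_surjective, sup_comm,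
    ← Submodule.map_mkQ_eq_top, Submodule.map_span, ← Set.range_comp]
  rfl

theorem exists_linearIndependent_mkQ_and_span_sup_eq_top (I : Ideal R) [I.IsMaximal] {ι : Type u}
    {v : ι → M} (hv : Submodule.span R (Set.range v) = ⊤) :
    ∃ (κ : Type u) (b : κ → ι),
      LinearIndependent (R ⧸ I) (fun i => (I • (⊤ : Submodule R M)).mkQ (v (b i))) ∧
      Submodule.span R (Set.range fun i => v (b i)) ⊔ I • ⊤ = ⊤ := by
  obtain ⟨κ, b, -, hspan, hli⟩ :=
    exists_linearIndependent' (R ⧸ I) fun i => (I • (⊤ : Submodule R M)).mkQ (v i)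
  refine ⟨κ, b, hli, (span_range_mkQ_eq_top_iff I).1 (hspan.trans ?_)⟩
  rw [span_range_mkQ_eq_top_iff, hv, top_sup_eq]

theorem DualSeparatesMod.exists_dual_family {I : Ideal R} [I.IsMaximal]
    (hsep : DualSeparatesMod I M) {ι : Type*} [Finite ι] [DecidableEq ι] {v : ι → M}
    (hv : LinearIndependent (R ⧸ I) fun i => (I • (⊤ : Submodule R M)).mkQ (v i)) :
    ∃ Q : ι → Module.Dual R M, ∀ i j,
      Ideal.Quotient.mk I (Q i (v j)) = (1 : Matrix ι ι (R ⧸ I)) i j := by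
  have := Fintype.ofFinite ι
  let Φ : Module.Dual R M →ₗ[R] ι → R ⧸ I :=
    LinearMap.pi fun j => (Algebra.linearMap R (R ⧸ I)).comp (LinearMap.applyₗ (v j))
  have hspan : Submodule.span (R ⧸ I) (Set.range Φ) = ⊤ := by
    by_contra hne
    obtain ⟨c, hc, hker⟩ := Submodule.exists_le_ker_of_lt_top _ (lt_top_iff_ne_top.2 hne)
    choose r hr using fun i => Ideal.Quotient.mk_surjective (c (Pi.single i 1))
    have hcomb : ∑ i, r i • v i ∈ I • (⊤ : Submodule R M) := by
      refine hsep _ fun P => Ideal.Quotient.eq_zero_iff_mem.1 ?_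
      have hP : c (Φ P) = 0 := hker (Submodule.subset_span ⟨P, rfl⟩)
      rw [pi_eq_sum_univ' (Φ P), map_sum] at hP
      rw [← hP]
      simp [Φ, hr, mul_comm]
    refine hc (LinearMap.pi_ext' fun i => LinearMap.ext_ring ?_)
    refine Fintype.linearIndependent_iff.1 hv (fun i => c (Pi.single i 1)) ?_ i
    rw [← Submodule.Quotient.mk_eq_zero, ← Submodule.mkQ_apply, map_sum] at hcomb
    rw [← hcomb]
    exact Finset.sum_congr rfl fun i _ => by rw [← hr]; rfl
  have hrange : LinearMap.range Φ = ⊤ := by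
    rw [← Submodule.span_eq (LinearMap.range Φ), LinearMap.coe_range,
      ← Submodule.restrictScalars_span R (R ⧸ I) Ideal.Quotient.mk_surjective, hspan,
      Submodule.restrictScalars_top]
  choose Q hQ using fun i => LinearMap.range_eq_top.1 hrange ((1 : Matrix ι ι (R ⧸ I)) i)
  exact ⟨Q, fun i j => congrFun (hQ i) j⟩

theorem DualSeparatesMod.linearIndependent [IsDomain R] {I : Ideal R} [I.IsMaximal]
    (hsep : DualSeparatesMod I M) {ι : Type*} {v : ι → M}
    (hv : LinearIndependent (R ⧸ I) fun i => (I • (⊤ : Submodule R M)).mkQ (v i)) :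
    LinearIndependent R v := by
  classical
  rw [linearIndependent_iff_finset_linearIndependent] at hv ⊢
  intro s
  obtain ⟨Q, hQ⟩ := hsep.exists_dual_family (hv s)
  let A : Matrix s s R := Matrix.of fun i j => Q i (v j)
  have hdet : A.det ≠ 0 := by
    intro h
    have hA : A.map (Ideal.Quotient.mk I) = 1 := Matrix.ext hQ
    have := RingHom.map_det (Ideal.Quotient.mk I) A
    rw [RingHom.mapMatrix_apply, hA, Matrix.det_one, h, map_zero] at this
    exact zero_ne_one this
  refine Fintype.linearIndependent_iff.2 fun f hf => congrFun ?_
  refine Matrix.eq_zero_of_mulVec_eq_zero hdet (funext fun i => ?_)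
  have hQf := congrArg (Q i) hf
  simpa [A, Matrix.mulVec, dotProduct, mul_comm] using hQf

end ResidueField

section Graded

open DirectSum Finset.HasAntidiagonal

variable {k A : Type*} [CommRing k] [CommRing A] [Algebra k A]
  {𝒜 : ℕ → Submodule k A} [GradedAlgebra 𝒜] {R : Subalgebra k A}

theorem coe_decompose_smul_eq_sum_antidiagonal (r : R) (a : A) (d : ℕ) :
    (decompose 𝒜 (r • a) d : A) =
      ∑ ij ∈ antidiagonal d, (decompose 𝒜 (r : A) ij.1 : A) * decompose 𝒜 a ij.2 := by
  rw [Subalgebra.smul_def, smul_eq_mul, decompose_mul, coe_mul_apply_eq_sum_antidiagonal]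

theorem span_isHomogeneous_of_isHomogeneousElem (hR : SetLike.IsHomogeneous 𝒜 R) {s : Set A}
    (hs : ∀ a ∈ s, SetLike.IsHomogeneousElem 𝒜 a) :
    (Submodule.span R s).IsHomogeneous 𝒜 := by
  intro d a ha
  induction ha using Submodule.span_induction generalizing d with
  | mem a ha =>
    obtain ⟨e, he⟩ := hs a ha
    rw [decompose_of_mem 𝒜 he, coe_of_apply]
    split_ifs
    · exact Submodule.subset_span ha
    · exact zero_mem _
  | zero => simp
  | add a b _ _ iha ihb =>
    rw [decompose_add, DirectSum.add_apply, Submodule.coe_add]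
    exact add_mem (iha d) (ihb d)
  | smul r a _ iha =>
    rw [coe_decompose_smul_eq_sum_antidiagonal]
    exact sum_mem fun ij _ => Submodule.smul_mem _ (⟨_, hR ij.1 r.2⟩ : R) (iha ij.2)

theorem decompose_mem_of_mem_smul_top (hR : SetLike.IsHomogeneous 𝒜 R) {I : Ideal R}
    (hI : ∀ r ∈ I, decompose 𝒜 (r : A) 0 = 0) {N : Submodule R A} {d : ℕ}
    (hN : ∀ e < d, ∀ a ∈ 𝒜 e, a ∈ N) {x : A} (hx : x ∈ I • (⊤ : Submodule R A)) :
    (decompose 𝒜 x d : A) ∈ N := by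
  induction hx using Submodule.smul_induction_on' with
  | smul r hr a _ =>
    rw [coe_decompose_smul_eq_sum_antidiagonal]
    refine sum_mem fun ⟨i, j⟩ hij => ?_
    rw [mem_antidiagonal] at hij
    rcases Nat.eq_zero_or_pos i with rfl | hi
    · simp [hI r hr]
    · exact N.smul_mem (⟨_, hR i r.2⟩ : R) (hN j (by omega) _ (SetLike.coe_mem _))
  | add x _ y _ hx hy =>
    rw [decompose_add, DirectSum.add_apply, Submodule.coe_add]
    exact add_mem hx hy

theorem eq_top_of_sup_smul_top_eq_top_of_isHomogeneous (hR : SetLike.IsHomogeneous 𝒜 R)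
    {I : Ideal R} (hI : ∀ r ∈ I, decompose 𝒜 (r : A) 0 = 0) {N : Submodule R A}
    (hN : N.IsHomogeneous 𝒜) (hsup : N ⊔ I • ⊤ = ⊤) : N = ⊤ := by
  have hdeg : ∀ d, ∀ a ∈ 𝒜 d, a ∈ N := by
    intro d
    induction d using Nat.strong_induction_on with
    | _ d ih =>
    intro a ha
    obtain ⟨b, hb, x, hx, rfl⟩ := Submodule.mem_sup.1 (hsup.ge (Submodule.mem_top (x := a)))
    rw [← decompose_of_mem_same 𝒜 ha, decompose_add, DirectSum.add_apply, Submodule.coe_add]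
    exact add_mem (hN d hb) (decompose_mem_of_mem_smul_top hR hI ih hx)
  classical
  refine eq_top_iff.2 fun a _ => ?_
  rw [← sum_support_decompose 𝒜 a]
  exact sum_mem fun d _ => hdeg d _ (SetLike.coe_mem _)

theorem DualSeparatesMod.free_of_isHomogeneous [IsDomain R] (hR : SetLike.IsHomogeneous 𝒜 R)
    {I : Ideal R} [I.IsMaximal] (hI : ∀ r ∈ I, decompose 𝒜 (r : A) 0 = 0)
    (hsep : DualSeparatesMod I A) : Module.Free R A := by
  have hspan : Submodule.span R (Set.range fun a : {a // SetLike.IsHomogeneousElem 𝒜 a} => a.1) =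
      ⊤ := by
    classical
    refine eq_top_iff.2 fun a _ => ?_
    rw [← sum_support_decompose 𝒜 a]
    exact sum_mem fun d _ => Submodule.subset_span ⟨⟨_, d, SetLike.coe_mem _⟩, rfl⟩
  obtain ⟨κ, b, hli, hsup⟩ := exists_linearIndependent_mkQ_and_span_sup_eq_top I hspan
  have htop := eq_top_of_sup_smul_top_eq_top_of_isHomogeneous hR hI
    (span_isHomogeneous_of_isHomogeneousElem hR (Set.forall_mem_range.2 fun i => (b i).2)) hsup
  exact Module.Free.of_basis (Module.Basis.mk (hsep.linearIndependent hli) htop.ge)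

end Graded

section Averaging

/-- The subgroup of the `g` with `1 - ρ g ∈ L`, where `L` is a left ideal. It turns a
statement about generators of the group into one about all its elements. -/
def subgroupOfOneSubMem {Γ B : Type*} [Group Γ] [Ring B] (ρ : Γ →* B) (L : Ideal B) :
    Subgroup Γ where
  carrier := {g | 1 - ρ g ∈ L}
  one_mem' := by simp
  mul_mem' {g h} hg hh := by
    have hgh : 1 - ρ (g * h) = 1 - ρ g + ρ g * (1 - ρ h) := by
      rw [map_mul]
      noncomm_ring
    change 1 - ρ (g * h) ∈ L
    exact hgh ▸ add_mem hg (L.mul_mem_left _ hh)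
  inv_mem' {g} hg := by
    have hinv : 1 - ρ g⁻¹ = -ρ g⁻¹ * (1 - ρ g) := by
      rw [neg_mul, mul_sub, ← map_mul, inv_mul_cancel, map_one, mul_one, neg_sub]
    change 1 - ρ g⁻¹ ∈ L
    exact hinv ▸ L.mul_mem_left _ hg

theorem mem_subgroupOfOneSubMem {Γ B : Type*} [Group Γ] [Ring B] {ρ : Γ →* B} {L : Ideal B}
    {g : Γ} : g ∈ subgroupOfOneSubMem ρ L ↔ 1 - ρ g ∈ L :=
  Iff.rfl

theorem one_sub_averageMap_mem {R M Γ : Type*} [CommRing R] [AddCommGroup M] [Module R M]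
    [Group Γ] [Fintype Γ] [Invertible (Fintype.card Γ : R)] (ρ : Representation R Γ M)
    {L : Ideal (Module.End R M)} (hL : ∀ g, 1 - ρ g ∈ L) : 1 - ρ.averageMap ∈ L := by
  have havg : 1 - ρ.averageMap = ⅟(Fintype.card Γ : R) • ∑ g, (1 - ρ g) := by
    rw [Finset.sum_sub_distrib, smul_sub, Finset.sum_const, Finset.card_univ,
      ← Nat.cast_smul_eq_nsmul R, invOf_smul_smul]
    simp [Representation.averageMap, GroupAlgebra.average]
  exact havg ▸ Submodule.smul_of_tower_mem L _ (sum_mem fun g _ => hL g)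

end Averaging

section LinearForm

variable {σ k : Type*} [Fintype σ] [DecidableEq σ] [CommSemiring k]

/-- The identification of the dual of `k ^ σ` with the linear forms of `k[X_j : j ∈ σ]`. -/
noncomputable def linearForm : Module.Dual k (σ → k) →ₗ[k] MvPolynomial σ k :=
  ∑ j, (LinearMap.applyₗ (Pi.single j 1)).smulRight (X j)

theorem linearForm_apply (α : Module.Dual k (σ → k)) :
    linearForm α = ∑ j, C (α (Pi.single j 1)) * X j := by
  simp [linearForm, smul_eq_C_mul]

theorem isHomogeneous_linearForm (α : Module.Dual k (σ → k)) :
    (linearForm α).IsHomogeneous 1 := by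
  rw [linearForm_apply]
  exact IsHomogeneous.sum _ _ _ fun j _ => isHomogeneous_C_mul_X _ j

theorem linearForm_proj (i : σ) : linearForm (LinearMap.proj i : (σ → k) →ₗ[k] k) = X i := by
  simp [linearForm_apply, Pi.single_apply]

theorem eval_linearForm (v : σ → k) (α : Module.Dual k (σ → k)) :
    eval v (linearForm α) = α v := by
  conv_rhs => rw [pi_eq_sum_univ' v]
  simp [linearForm_apply, mul_comm]

theorem linearForm_injective : Function.Injective (linearForm (σ := σ) (k := k)) :=
  fun α β h => LinearMap.ext fun v => by rw [← eval_linearForm, h, eval_linearForm]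

end LinearForm

theorem dvd_algHom_sub_of_dvd_X {σ R A : Type*} [CommSemiring R] [CommRing A] [Algebra R A]
    {φ ψ : MvPolynomial σ R →ₐ[R] A} {a : A} (h : ∀ i, a ∣ φ (X i) - ψ (X i))
    (f : MvPolynomial σ R) : a ∣ φ f - ψ f := by
  let q := Ideal.Quotient.mkₐ R (Ideal.span {a})
  have hq : q.comp φ = q.comp ψ := MvPolynomial.algHom_ext fun i =>
    Ideal.Quotient.eq.2 (Ideal.mem_span_singleton.2 (h i))
  exact Ideal.mem_span_singleton.1 (Ideal.Quotient.eq.1 (DFunLike.congr_fun hq f))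

section GLAction

variable {n : ℕ} {k : Type*} [Field k]

theorem glAct_X (g : LinearMap.GeneralLinearGroup k (Fin n → k)) (i : Fin n) :
    glAct g (X i) = linearForm (LinearMap.proj i ∘ₗ
      ((g⁻¹ : LinearMap.GeneralLinearGroup k (Fin n → k)) : (Fin n → k) →ₗ[k] Fin n → k)) := by
  rw [glAct, aeval_X, linearForm_apply]
  rfl

theorem glAct_linearForm (g : LinearMap.GeneralLinearGroup k (Fin n → k))
    (α : Module.Dual k (Fin n → k)) :
    glAct g (linearForm α) = linearForm (α ∘ₗ
      ((g⁻¹ : LinearMap.GeneralLinearGroup k (Fin n → k)) : (Fin n → k) →ₗ[k] Fin n → k)) := by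
  have hα : α = ∑ j, α (Pi.single j 1) • LinearMap.proj j :=
    LinearMap.pi_ext' fun i => LinearMap.ext_ring (by simp [Pi.single_apply])
  rw [← LinearMap.dualMap_apply', hα]
  simp only [map_sum, map_smul, linearForm_proj, glAct_X, LinearMap.dualMap_apply']

theorem glAct_one : glAct (1 : LinearMap.GeneralLinearGroup k (Fin n → k)) = AlgHom.id k _ :=
  MvPolynomial.algHom_ext fun i => by
    rw [glAct_X, inv_one, AlgHom.id_apply, ← linearForm_proj]
    rfl

theorem glAct_mul (g h : LinearMap.GeneralLinearGroup k (Fin n → k)) :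
    glAct (g * h) = (glAct g).comp (glAct h) :=
  MvPolynomial.algHom_ext fun i => by
    rw [AlgHom.comp_apply, glAct_X, glAct_X, glAct_linearForm, mul_inv_rev]
    rfl

theorem isHomogeneous_glAct (g : LinearMap.GeneralLinearGroup k (Fin n → k))
    {f : MvPolynomial (Fin n) k} {d : ℕ} (hf : f.IsHomogeneous d) :
    (glAct g f).IsHomogeneous d := by
  have hX : ∀ i, (glAct g (X i)).IsHomogeneous 1 := fun i => by
    rw [glAct_X]
    exact isHomogeneous_linearForm _
  rw [aeval_unique (glAct g), ← one_mul d]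
  exact hf.aeval _ hX

theorem totalDegree_glAct_le (g : LinearMap.GeneralLinearGroup k (Fin n → k))
    (f : MvPolynomial (Fin n) k) : (glAct g f).totalDegree ≤ f.totalDegree := by
  conv_lhs => rw [← sum_homogeneousComponent f, map_sum]
  refine (totalDegree_finsetSum _ _).trans (Finset.sup_le fun d hd => ?_)
  exact (isHomogeneous_glAct g (homogeneousComponent_isHomogeneous d f)).totalDegree_le.trans
    (Nat.lt_succ_iff.1 (Finset.mem_range.1 hd))

theorem linearForm_dvd_sub_glAct {s : LinearMap.GeneralLinearGroup k (Fin n → k)}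
    {α : Module.Dual k (Fin n → k)}
    (hs : ∀ v, α v = 0 → (s : (Fin n → k) →ₗ[k] Fin n → k) v = v) (f : MvPolynomial (Fin n) k) :
    linearForm α ∣ f - glAct s f := by
  refine dvd_algHom_sub_of_dvd_X (φ := AlgHom.id k _) (fun i => ?_) f
  set s' := ((s⁻¹ : LinearMap.GeneralLinearGroup k (Fin n → k)) : (Fin n → k) →ₗ[k] Fin n → k)
  -- `X i - s • X i` is a linear form vanishing on the hyperplane `α = 0`, so a multiple of `α`.
  have hker : LinearMap.ker α ≤ LinearMap.ker (LinearMap.proj i - LinearMap.proj i ∘ₗ s') := by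
    intro v hv
    have hfix : s' v = v := by
      conv_lhs => rw [← hs v hv]
      exact LinearMap.congr_fun (Units.inv_mul s) v
    simp [hfix]
  obtain ⟨c, hc⟩ := Submodule.mem_span_singleton.1 <| by
    simpa using mem_span_of_iInf_ker_le_ker (L := fun _ : Unit => α) (by simpa using hker)
  rw [AlgHom.id_apply, glAct_X, ← linearForm_proj, ← map_sub, ← hc, map_smul, smul_eq_C_mul]
  exact Dvd.intro_left _ rfl

end GLAction

section Invariants

variable {n : ℕ} {k : Type*} [Field k]
  {G : Subgroup (LinearMap.GeneralLinearGroup k (Fin n → k))}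

theorem mem_invariants_iff {f : MvPolynomial (Fin n) k} :
    f ∈ invariants n k G ↔ ∀ g ∈ G, glAct g f = f := by
  simp only [invariants, Algebra.mem_iInf, AlgHom.mem_equalizer, AlgHom.id_apply]

attribute [local instance] MvPolynomial.gradedAlgebra

theorem isHomogeneous_invariants :
    DirectSum.SetLike.IsHomogeneous (homogeneousSubmodule (Fin n) k) (invariants n k G) := by
  intro d f hf
  rw [mem_invariants_iff] at hf ⊢
  intro g hg
  let γ : homogeneousSubmodule (Fin n) k →ₐᵍ[k] homogeneousSubmodule (Fin n) k :=
    { toAlgHom := glAct g, map_mem := isHomogeneous_glAct g }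
  have hγ : γ f = f := hf g hg
  exact (map_directSumDecompose _ (homogeneousSubmodule (Fin n) k) γ).trans (by rw [hγ])

variable (G) in
/-- The action of `G` on `k[V]`, as a representation over the ring of invariants. -/
noncomputable def invariantsRep :
    Representation (invariants n k G) G (MvPolynomial (Fin n) k) where
  toFun g :=
    { toFun := glAct g
      map_add' := map_add _
      map_smul' := fun r f => by
        rw [Subalgebra.smul_def, smul_eq_mul, map_mul, mem_invariants_iff.1 r.2 g g.2]
        rfl }
  map_one' := LinearMap.ext fun f => by simp [glAct_one]
  map_mul' g h := LinearMap.ext fun f => by simp [glAct_mul]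

theorem mem_invariants_of_mem_invariants_invariantsRep {f : MvPolynomial (Fin n) k}
    (hf : f ∈ (invariantsRep G).invariants) : f ∈ invariants n k G :=
  mem_invariants_iff.2 fun g hg => hf ⟨g, hg⟩

variable (G) in
/-- The invariant polynomials without constant term. -/
noncomputable def augmentationIdeal : Ideal (invariants n k G) :=
  RingHom.ker (constantCoeff.comp (algebraMap (invariants n k G) (MvPolynomial (Fin n) k)))

instance isMaximal_augmentationIdeal : (augmentationIdeal G).IsMaximal :=
  RingHom.ker_isMaximal_of_surjective _ fun c =>
    ⟨algebraMap k _ c, constantCoeff_C (Fin n) c⟩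

theorem decompose_zero_of_mem_augmentationIdeal {r : invariants n k G}
    (hr : r ∈ augmentationIdeal G) :
    DirectSum.decompose (homogeneousSubmodule (Fin n) k) (r : MvPolynomial (Fin n) k) 0 = 0 := by
  have h0 : coeff 0 (r : MvPolynomial (Fin n) k) = 0 := hr
  refine Subtype.ext ?_
  rw [← DirectSum.Decomposition.decompose'_eq, decomposition.decompose'_apply,
    homogeneousComponent_zero, h0, C_0]
  rfl

variable (G) in
/-- The endomorphisms of `k[V]` over its invariants that strictly lower the degree of every
polynomial they do not kill. -/
def degreeLowering : Set (Module.End (invariants n k G) (MvPolynomial (Fin n) k)) :=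
  {T | ∀ f, T f ≠ 0 → (T f).totalDegree < f.totalDegree}

/-- `Δ` is the divided difference (Demazure) operator of `s`; its divisor `a` is a linear form, so
`Δ` lowers degrees. -/
theorem exists_mem_degreeLowering_of_isPseudoreflection {s : G}
    (hs : IsPseudoreflection (s : LinearMap.GeneralLinearGroup k (Fin n → k))) :
    ∃ Δ ∈ degreeLowering G, ∃ a, 1 - invariantsRep G s = LinearMap.mulLeft _ a * Δ := by
  obtain ⟨-, -, α, hα, hfix⟩ := hs
  have ha : linearForm α ≠ 0 := fun h =>
    hα (linearForm_injective (h.trans (map_zero linearForm).symm))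
  let Δ := LinearMap.codRestrictOfInjective (1 - invariantsRep G s)
    (LinearMap.mulLeft (invariants n k G) (linearForm α)) (mul_right_injective₀ ha) fun f =>
      (linearForm_dvd_sub_glAct hfix f).imp fun _ => Eq.symm
  have hΔ : ∀ f, linearForm α * Δ f = f - glAct s f :=
    LinearMap.codRestrictOfInjective_comp_apply _ (LinearMap.mulLeft _ _) _ _
  refine ⟨Δ, fun f hf => ?_, linearForm α, LinearMap.ext fun f => (hΔ f).symm⟩
  have hdeg : 1 + (Δ f).totalDegree ≤ f.totalDegree := by
    rw [← (isHomogeneous_linearForm α).totalDegree ha, ← totalDegree_mul_of_isDomain ha hf, hΔ]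
    exact (totalDegree_sub _ _).trans (max_le le_rfl (totalDegree_glAct_le _ f))
  omega

theorem one_sub_invariantsRep_mem_span_degreeLowering
    (hgen : G = Subgroup.closure {g | g ∈ G ∧ IsPseudoreflection g}) (g : G) :
    1 - invariantsRep G g ∈ Ideal.span (degreeLowering G) := by
  let N := subgroupOfOneSubMem (invariantsRep G) (Ideal.span (degreeLowering G))
  have hle : G ≤ N.map G.subtype := by
    refine hgen.le.trans ((Subgroup.closure_le _).2 ?_)
    rintro s ⟨hsG, hs⟩
    obtain ⟨Δ, hΔ, a, ha⟩ := exists_mem_degreeLowering_of_isPseudoreflection (s := ⟨s, hsG⟩) hs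
    refine ⟨⟨s, hsG⟩, mem_subgroupOfOneSubMem.2 ?_, rfl⟩
    rw [ha]
    exact Ideal.mul_mem_left _ _ (Ideal.subset_span hΔ)
  obtain ⟨h, hh, hg⟩ := hle g.2
  exact Subtype.ext hg ▸ hh

theorem dualSeparatesMod_invariants [Fintype G] (hcard : (Fintype.card G : k) ≠ 0)
    (hgen : G = Subgroup.closure {g | g ∈ G ∧ IsPseudoreflection g})
    (I : Ideal (invariants n k G)) : DualSeparatesMod I (MvPolynomial (Fin n) k) := by
  have hunit : IsUnit (Fintype.card G : invariants n k G) := by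
    simpa using (isUnit_iff_ne_zero.2 hcard).map (algebraMap k (invariants n k G))
  let := hunit.invertible
  let π : Module.Dual (invariants n k G) (MvPolynomial (Fin n) k) :=
    LinearMap.codRestrictOfInjective (invariantsRep G).averageMap
      (Algebra.linearMap (invariants n k G) _) Subtype.val_injective fun f =>
        ⟨⟨_, mem_invariants_of_mem_invariants_invariantsRep
          ((invariantsRep G).averageMap_invariant f)⟩, rfl⟩
  have hπ : π.smulRight 1 = (invariantsRep G).averageMap := LinearMap.ext fun f => by
    rw [LinearMap.smulRight_apply, ← Algebra.algebraMap_eq_smul_one]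
    exact LinearMap.codRestrictOfInjective_comp_apply _ (Algebra.linearMap (invariants n k G) _)
      _ _ f
  refine DualSeparatesMod.of_one_sub_mem_span totalDegree (degreeLowering G) (fun _ => id) π 1 ?_
  rw [hπ]
  exact one_sub_averageMap_mem _ (one_sub_invariantsRep_mem_span_degreeLowering hgen)

end Invariants

/-- Shephard–Todd–Chevalley, `(1) ⇒ (2)`: if a finite subgroup
`W ⊂ GL(V)` with `char k ∤ |W|` is generated by pseudoreflections, then `k[V]` is a
free module over the invariant ring `k[V]^W`. -/
theorem polynomials_free_over_invariants {n : ℕ} {k : Type*} [Field k]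
    (G : Subgroup (LinearMap.GeneralLinearGroup k (Fin n → k))) [Fintype G]
    (hcard : (Fintype.card G : k) ≠ 0)
    (hgen : G = Subgroup.closure {g | g ∈ G ∧ IsPseudoreflection g}) :
    Module.Free ↥(invariants n k G) (MvPolynomial (Fin n) k) := by
  have hsep : DualSeparatesMod (augmentationIdeal G) (MvPolynomial (Fin n) k) :=
    dualSeparatesMod_invariants hcard hgen _
  let := MvPolynomial.gradedAlgebra (R := k) (σ := Fin n)
  exact hsep.free_of_isHomogeneous isHomogeneous_invariants
    fun _ => decompose_zero_of_mem_augmentationIdeal
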